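/- arXiv:2312.13159 — 2 statements merged into one kernel-verified Lean document; each statement's English description precedes it below -/
import Mathlib

section
/- For n ≥ 1, the number of modern Tamari intervals of size n equals 3·2^{n-1}/((n+1)(n+2)) · C(2n, n). -/
/-- Binary trees: a leaf or a binary node with two subtrees. -/
inductive BT : Type
  | leaf : BT
  | node : BT → BT → BT

namespace BT

/-- Number of binary (internal) nodes. -/
def size : BT → ℕ
  | leaf => 0
  | node l r => l.size + r.size + 1

/-- One right rotation somewhere in the tree: ((A,B),C) ↦ (A,(B,C)). -/
inductive Rot : BT → BT → Prop
  | rotate (A B C : BT) : Rot (node (node A B) C) (node A (node B C))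
  | left {l l' : BT} (r : BT) : Rot l l' → Rot (node l r) (node l' r)
  | right (l : BT) {r r' : BT} : Rot r r' → Rot (node l r) (node l r')

/-- Tamari order: reflexive-transitive closure of right rotation. -/
def tle (T T' : BT) : Prop := Relation.ReflTransGen Rot T T'

/-- Bracket-vector: sizes of right subtrees of nodes, in infix order. -/
def bracket : BT → List ℕ
  | leaf => []
  | node l r => bracket l ++ r.size :: bracket r

/-- Dual bracket-vector: sizes of left subtrees of nodes, in infix order. -/
def dualBracket : BT → List ℕ
  | leaf => []
  | node l r => dualBracket l ++ l.size :: dualBracket r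

/-- Canopy word: for each leaf (left to right), 1 if it is a left child, 0 if a right child;
the argument `b` is the value assigned to the tree if it is itself a leaf. -/
def canopyAux (b : ℕ) : BT → List ℕ
  | leaf => [b]
  | node l r => canopyAux 1 l ++ canopyAux 0 r

/-- Canopy-vector of a binary tree. -/
def canopy (T : BT) : List ℕ := canopyAux 1 T

/-- Left-right mirror. -/
def mir : BT → BT
  | leaf => leaf
  | node l r => node (mir r) (mir l)

/-- Tamari interval of size n. -/
def interval (p : BT × BT) (n : ℕ) : Prop :=
  p.1.size = n ∧ p.2.size = n ∧ tle p.1 p.2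

/-- Tamari interval (of unspecified size). -/
def isInt (p : BT × BT) : Prop := p.1.size = p.2.size ∧ tle p.1 p.2

/-- The rise operation (T,T') ↦ ((T,ε),(ε,T')). -/
def riseF (p : BT × BT) : BT × BT := (node p.1 leaf, node leaf p.2)

/-- An interval is modern when its rise is again an interval. -/
def modern (p : BT × BT) : Prop := tle (node p.1 leaf) (node leaf p.2)

/-- Infinitely modern: every iterated rise is an interval. -/
def infModern (p : BT × BT) : Prop :=
  ∀ k : ℕ, tle ((riseF^[k] p).1) ((riseF^[k] p).2)

/-- Synchronized: equal canopies. -/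
def synced (p : BT × BT) : Prop := canopy p.1 = canopy p.2

/-- Self-dual: equal to its dual (mir T', mir T). -/
def selfDual (p : BT × BT) : Prop := mir p.2 = p.1 ∧ mir p.1 = p.2

/-- Number of positions where the two canopies agree. -/
def agreeCount (p : BT × BT) : ℕ :=
  ((List.range (p.1.size + 1)).filter
    (fun i => (canopy p.1).getD i 0 == (canopy p.2).getD i 0)).length

/-- Number of canopy positions of joint type (a on top, b on bottom), for an interval (T,T')
with T' the upper tree. -/
def typeCount (a b : ℕ) (p : BT × BT) : ℕ :=
  ((List.range (p.1.size + 1)).filter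
    (fun i => ((canopy p.2).getD i 0 == a) && ((canopy p.1).getD i 0 == b))).length

end BT

/-!
Sort the modern intervals `(T, S)` by the upper tree `S`, and count the lower trees `T` by the
length of their left branch, marked by `u`. Below `node L R` lie exactly the trees from which a
node of the left branch can be extracted, leaving a left subtree `A ≤ L` and a remainder `B ≤ R`.
Applied to the rise, this says that `(T, S)` is modern when `shift T ≤ S` for a single tree
`shift T`. For a nonempty `L`, modernity forces the extracted node to be the last one on the left
branch, so that `T` is determined by two modern intervals, below `L` and below `R`; for `L = leaf`
the node can stand at any height of the left branch of `B`. Hence the generating series `F(t, u)`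
satisfies Tutte's equation `F = 1 + t u F² + t u (F - F(t, 1)) / (u - 1)`, whose unique solution
has `F(t, 1) = 1 + v - v²` with `v = t (1 + 2 v)²`. Since `1 + 2 v` is the Catalan series at `2t`,
the coefficients of `F(t, 1)` are explicit.
-/

section CatalyticEquation

open PowerSeries
open scoped Polynomial
open Finset.HasAntidiagonal (antidiagonal antidiagonal.fst_le antidiagonal.snd_le)

variable {k : Type*} [CommRing k]

lemma isLeftRegular_polynomial_X_sub_one : IsLeftRegular (Polynomial.X - 1 : k[X]) := by
  simpa only [map_one] using (Polynomial.monic_X_sub_C (1 : k)).isRegular.left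

/-- Tutte's equation with catalytic variable `u` for a series `F(t, u)`,
`(u - 1) F = (u - 1) (1 + t u F²) + t u (F - m)`, where `m(t)` plays the role of `F(t, 1)`.
Here `u` is the polynomial variable and `t` the power series variable. -/
def CatalyticEq (F : k[X]⟦X⟧) (m : k⟦X⟧) : Prop :=
  C (Polynomial.X - 1) * F = C (Polynomial.X - 1) * (1 + C Polynomial.X * X * F ^ 2) +
    C Polynomial.X * X * (F - map Polynomial.C m)

lemma catalyticEq_iff_coeff {F : k[X]⟦X⟧} {m : k⟦X⟧} :
    CatalyticEq F m ↔ coeff 0 F = 1 ∧ ∀ n, (Polynomial.X - 1) * coeff (n + 1) F =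
      Polynomial.X * (Polynomial.X - 1) * ∑ ij ∈ antidiagonal n, coeff ij.1 F * coeff ij.2 F +
        Polynomial.X * (coeff n F - Polynomial.C (coeff n m)) := by
  have factor_X : C (Polynomial.X - 1) * (1 + C Polynomial.X * X * F ^ 2) +
      C Polynomial.X * X * (F - map Polynomial.C m) = C (Polynomial.X - 1) +
        X * (C (Polynomial.X * (Polynomial.X - 1)) * (F * F) +
          C Polynomial.X * (F - map Polynomial.C m)) := by
    rw [map_mul]
    ring
  rw [CatalyticEq, factor_X, PowerSeries.ext_iff, ← Nat.and_forall_add_one]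
  refine and_congr ?_ (forall_congr' fun n => ?_)
  · simpa using isLeftRegular_polynomial_X_sub_one.eq_iff (b := (1 : k[X]))
  · rw [coeff_C_mul, map_add, coeff_succ_X_mul, map_add, coeff_C_mul, coeff_C_mul, coeff_C,
      if_neg n.succ_ne_zero, zero_add, coeff_mul, map_sub (coeff n), coeff_map]

lemma CatalyticEq.eq_map_eval_one {F : k[X]⟦X⟧} {m : k⟦X⟧} (h : CatalyticEq F m) :
    m = map (Polynomial.evalRingHom 1) F := by
  have eval_eq := congrArg (map (Polynomial.evalRingHom (1 : k))) h
  have eval_map : map (Polynomial.evalRingHom (1 : k)) (map Polynomial.C m) = m := by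
    ext n; simp
  simp only [map_mul, map_add, map_sub, map_C, map_X, Polynomial.coe_evalRingHom, Polynomial.eval_X,
    sub_self, zero_mul, zero_add, map_one, one_mul, eval_map] at eval_eq
  exact (sub_eq_zero.1 (X_mul_cancel (by rw [mul_zero, ← eval_eq]))).symm

lemma CatalyticEq.unique {F G : k[X]⟦X⟧} {m m' : k⟦X⟧} (hF : CatalyticEq F m)
    (hG : CatalyticEq G m') : F = G := by
  obtain ⟨F_zero, F_succ⟩ := catalyticEq_iff_coeff.1 hF
  obtain ⟨G_zero, G_succ⟩ := catalyticEq_iff_coeff.1 hG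
  ext1 n
  induction n using Nat.strong_induction_on with
  | _ n ih =>
    cases n with
    | zero => rw [F_zero, G_zero]
    | succ n =>
      have hm : coeff n m = coeff n m' := by
        rw [hF.eq_map_eval_one, hG.eq_map_eval_one, coeff_map, coeff_map, ih n n.lt_succ_self]
      apply isLeftRegular_polynomial_X_sub_one
      change (Polynomial.X - 1) * _ = (Polynomial.X - 1) * _
      rw [F_succ, G_succ, ih n n.lt_succ_self, hm]
      congr 2
      refine Finset.sum_congr rfl fun ij hij => ?_
      rw [ih _ (Nat.lt_succ_of_le (antidiagonal.fst_le hij)),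
        ih _ (Nat.lt_succ_of_le (antidiagonal.snd_le hij))]

lemma CatalyticEq.right_unique {F G : k[X]⟦X⟧} {m m' : k⟦X⟧} (hF : CatalyticEq F m)
    (hG : CatalyticEq G m') : m = m' := by
  rw [hF.eq_map_eval_one, hG.eq_map_eval_one, hF.unique hG]

lemma catalytic_equation_of_parametrization {A : Type*} [CommRing A] {t u v y F : A}
    (hv : v = t * (1 + 2 * v) ^ 2) (hy : y = u * t * (1 + v) * (1 + y) ^ 2)
    (hF : F * (1 + v - v * y) = (1 + v) * (1 + y) * (1 - v * y))
    (regular : IsLeftRegular (1 + v - v * y)) :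
    (u - 1) * F = (u - 1) * (1 + u * t * F ^ 2) + u * t * (F - (1 + v - v ^ 2)) := by
  set D := 1 + v - v * y with hD
  have quadratic_part : D ^ 2 * (F - 1 - u * t * F ^ 2) = v * y * (1 - v * y - v ^ 2) := by
    linear_combination (D - u * t * (F * D + (1 + v) * (1 + y) * (1 - v * y))) * hF +
      (1 + v) * (1 - v * y) ^ 2 * hy
  have linear_part :
      D * (F - (1 + v - v ^ 2)) = (1 - v * y - v ^ 2) * (y - v + v * y) := by
    rw [hD] at hF ⊢
    linear_combination hF
  have elimination : (u - 1) * (v * y) = u * t * D * (y - v + v * y) := by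
    linear_combination (u - 1) * v * hy +
      u * t * (u * (1 + v) * (1 + y) ^ 2 * hv - (1 + 2 * v) ^ 2 * hy)
  apply regular.pow 2
  change D ^ 2 * _ = D ^ 2 * _
  linear_combination (u - 1) * quadratic_part - u * t * D * linear_part +
    (1 - v * y - v ^ 2) * elimination

lemma exists_powerSeries_eq_mul_one_add_sq {e : k⟦X⟧} (he : constantCoeff e = 0) :
    ∃ y : k⟦X⟧, y = e * (1 + y) ^ 2 := by
  have hs : HasSubst e := .of_constantCoeff_zero' he
  have catalan_eq := congrArg (map (Nat.castRingHom k)) catalanSeries_sq_mul_X_add_one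
  have subst_eq := congrArg (substAlgHom hs) catalan_eq
  simp only [map_add, map_mul, map_pow, map_one, map_X, substAlgHom_X] at subst_eq
  refine ⟨substAlgHom hs (map (Nat.castRingHom k) catalanSeries) - 1, ?_⟩
  linear_combination -subst_eq

/-- The quadratic method parametrizes the solution over the series `v` and `y` with `v = t(1 + 2v)²`
and `y = ut(1 + v)(1 + y)²`, as `F = (1 + v)(1 + y)(1 - vy) / (1 + v - vy)`. -/
theorem exists_catalyticEq {v : k⟦X⟧} (hv : v = X * (1 + 2 * v) ^ 2) :
    ∃ F, CatalyticEq F (1 + v - v ^ 2) := by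
  obtain ⟨V, hV⟩ : ∃ V : k[X]⟦X⟧, map Polynomial.C v = V := ⟨_, rfl⟩
  have V_eq : V = X * (1 + 2 * V) ^ 2 := by
    simpa only [map_mul, map_pow, map_add, map_one, map_ofNat, map_X, hV]
      using congrArg (map Polynomial.C) hv
  have V_constantCoeff : constantCoeff V = 0 := by rw [V_eq]; simp
  obtain ⟨y, hy⟩ := exists_powerSeries_eq_mul_one_add_sq (k := k[X])
    (e := C Polynomial.X * X * (1 + V)) (by simp)
  have isUnit : IsUnit (1 + V - V * y) := by
    simp [isUnit_iff_constantCoeff, V_constantCoeff]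
  obtain ⟨D', hD'⟩ := isUnit.exists_left_inv
  refine ⟨(1 + V) * (1 + y) * (1 - V * y) * D', ?_⟩
  simp only [CatalyticEq, map_sub, map_add, map_one, map_pow, hV]
  exact catalytic_equation_of_parametrization V_eq hy (by rw [mul_assoc, hD', mul_one])
    isUnit.isRegular.left

end CatalyticEquation

section CatalanNumbers

open PowerSeries

/-- The series `C(2t)`, where `C` is the generating series of the Catalan numbers. -/
noncomputable def catalanRescaled : ℤ⟦X⟧ :=
  rescale 2 (map (Nat.castRingHom ℤ) catalanSeries)

lemma coeff_catalanRescaled (n : ℕ) : coeff n catalanRescaled = 2 ^ n * catalan n := by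
  simp [catalanRescaled]

lemma catalanRescaled_eq : catalanRescaled = 1 + 2 * (X * catalanRescaled ^ 2) := by
  have h := congrArg (fun f => rescale (2 : ℤ) (map (Nat.castRingHom ℤ) f))
    catalanSeries_sq_mul_X_add_one
  simp only [map_add, map_mul, map_pow, map_one, map_X, rescale_X, map_ofNat] at h
  rw [catalanRescaled]
  linear_combination -h

lemma add_two_mul_catalan_succ (n : ℕ) :
    (n + 2) * catalan (n + 1) = 2 * (2 * n + 1) * catalan n := by
  refine Nat.eq_of_mul_eq_mul_left n.succ_pos ?_
  have h := Nat.succ_mul_centralBinom_succ n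
  rw [← succ_mul_catalan_eq_centralBinom, ← succ_mul_catalan_eq_centralBinom] at h
  rw [Nat.succ_eq_add_one]
  linear_combination h

lemma eight_mul_coeff_succ_one_add_sub_sq {v : ℤ⟦X⟧} (hv : 1 + 2 * v = catalanRescaled) (n : ℕ) :
    8 * coeff (n + 1) (1 + v - v ^ 2) =
      2 ^ (n + 2) * (4 * (catalan (n + 1) : ℤ) - catalan (n + 2)) := by
  have linearized : X * (C 8 * (1 + v - v ^ 2)) =
      X * (C 8 * catalanRescaled + C 2) + C 1 - catalanRescaled := by
    have h := catalanRescaled_eq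
    rw [← hv] at h ⊢
    simp only [map_ofNat, map_one]
    linear_combination h
  have h := congrArg (coeff (n + 2)) linearized
  rw [coeff_succ_X_mul, coeff_C_mul, map_sub (coeff (n + 2)), map_add, coeff_succ_X_mul, map_add,
    coeff_C_mul, coeff_C_of_ne_zero n.succ_ne_zero, coeff_C_of_ne_zero (n + 1).succ_ne_zero,
    coeff_catalanRescaled, coeff_catalanRescaled] at h
  linear_combination h

end CatalanNumbers

namespace BT

/-- `LeftSplit T A B`: some node on the left branch of `T` has left subtree `A`, and replacing the
subtree rooted at this node by its right subtree turns `T` into `B`. -/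
inductive LeftSplit : BT → BT → BT → Prop
  | root (A B : BT) : LeftSplit (node A B) A B
  | left {T A B : BT} (D : BT) : LeftSplit T A B → LeftSplit (node T D) A (node B D)

lemma size_eq_zero_iff {T : BT} : T.size = 0 ↔ T = leaf := by
  cases T <;> simp [size]

lemma LeftSplit.size_eq {T A B : BT} (h : LeftSplit T A B) : T.size = A.size + B.size + 1 := by
  induction h with
  | root A B => rfl
  | left D _ ih => simp only [size, ih]; omega

lemma LeftSplit.unique {T A B A' B' : BT} (h : LeftSplit T A B) (h' : LeftSplit T A' B')
    (hsize : A.size = A'.size) : A = A' ∧ B = B' := by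
  induction h generalizing A' B' with
  | root A B =>
    cases h' with
    | root => exact ⟨rfl, rfl⟩
    | left D h' => have := h'.size_eq; omega
  | left D h ih =>
    cases h' with
    | root => have := h.size_eq; omega
    | left D h' =>
      obtain ⟨rfl, rfl⟩ := ih h' hsize
      exact ⟨rfl, rfl⟩

section TamariOrder

lemma Rot.size_eq {T S : BT} (h : Rot T S) : T.size = S.size := by
  induction h with
  | rotate A B C => simp only [size]; omega
  | left _ _ ih => simp only [size, ih]
  | right _ _ ih => simp only [size, ih]

lemma tle.size_eq {T S : BT} (h : tle T S) : T.size = S.size := by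
  induction h with
  | refl => rfl
  | tail _ h ih => rw [ih, h.size_eq]

lemma tle_refl (T : BT) : tle T T := Relation.ReflTransGen.refl

lemma tle.trans {T S U : BT} (h : tle T S) (h' : tle S U) : tle T U :=
  Relation.ReflTransGen.trans h h'

lemma Rot.tle {T S : BT} (h : Rot T S) : tle T S := Relation.ReflTransGen.single h

lemma tle.node_left {T S : BT} (h : tle T S) (D : BT) : tle (node T D) (node S D) :=
  Relation.ReflTransGen.lift (node · D) (fun _ _ => Rot.left D) _ _ h

lemma tle.node_right {T S : BT} (h : tle T S) (D : BT) : tle (node D T) (node D S) :=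
  Relation.ReflTransGen.lift (node D) (fun _ _ => Rot.right D) _ _ h

lemma tle_leaf_iff {T : BT} : tle T leaf ↔ T = leaf :=
  ⟨fun h => size_eq_zero_iff.1 h.size_eq, by rintro rfl; exact tle_refl leaf⟩

lemma LeftSplit.tle_node {T A B : BT} (h : LeftSplit T A B) : tle T (node A B) := by
  induction h with
  | root A B => exact tle_refl _
  | left D _ ih => exact (ih.node_left D).trans (Rot.rotate _ _ _).tle

lemma LeftSplit.exists_of_rot {T S A B : BT} (h : LeftSplit S A B) (hrot : Rot T S) :
    ∃ A' B', LeftSplit T A' B' ∧ tle A' A ∧ tle B' B := by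
  induction h generalizing T with
  | root A B =>
    cases hrot with
    | rotate _ B₁ C => exact ⟨_, _, (root A B₁).left C, tle_refl _, tle_refl _⟩
    | left _ h => exact ⟨_, _, root _ _, h.tle, tle_refl _⟩
    | right _ h => exact ⟨_, _, root _ _, tle_refl _, h.tle⟩
  | left D h ih =>
    cases hrot with
    | rotate _ D₁ D₂ =>
      exact ⟨_, _, (h.left D₁).left D₂, tle_refl _, (Rot.rotate _ _ _).tle⟩
    | left _ hrot =>
      obtain ⟨A', B', h', hA, hB⟩ := ih hrot
      exact ⟨_, _, h'.left D, hA, hB.node_left D⟩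
    | right _ hrot => exact ⟨_, _, h.left _, tle_refl _, hrot.tle.node_right _⟩

theorem tle_node_iff {T L R : BT} :
    tle T (node L R) ↔ ∃ A B, LeftSplit T A B ∧ tle A L ∧ tle B R := by
  constructor
  · intro h
    induction h using Relation.ReflTransGen.head_induction_on with
    | refl => exact ⟨L, R, .root L R, tle_refl L, tle_refl R⟩
    | head hrot _ ih =>
      obtain ⟨A, B, h, hA, hB⟩ := ih
      obtain ⟨A', B', h', hA', hB'⟩ := h.exists_of_rot hrot
      exact ⟨A', B', h', hA'.trans hA, hB'.trans hB⟩
  · rintro ⟨A, B, h, hA, hB⟩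
    exact h.tle_node.trans ((hA.node_left B).trans (hB.node_right L))

end TamariOrder

section Shift

/-- The tree left after replacing the leftmost node, whose left subtree is a leaf, by its right
subtree. The leaf, which has no node, is sent to itself. -/
def dropLeftmost : BT → BT
  | leaf => leaf
  | node leaf D => D
  | node (node X Y) D => node (dropLeftmost (node X Y)) D

/-- The tree `C` for which the rise of `(T, S)` is a Tamari interval exactly when `C ≤ S`. -/
def shift (T : BT) : BT := dropLeftmost (node T leaf)

lemma leftSplit_dropLeftmost (T D : BT) :
    LeftSplit (node T D) leaf (dropLeftmost (node T D)) := by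
  induction T generalizing D with
  | leaf => exact .root leaf D
  | node X Y ihX _ => exact (ihX Y).left D

lemma LeftSplit.eq_dropLeftmost {T B : BT} (h : LeftSplit T leaf B) : B = dropLeftmost T := by
  cases T with
  | leaf => cases h
  | node X D => exact (h.unique (leftSplit_dropLeftmost X D) rfl).2

lemma size_shift (T : BT) : (shift T).size = T.size := by
  have := (leftSplit_dropLeftmost T leaf).size_eq
  simp only [size] at this
  rw [shift]
  omega

theorem modern_iff {T S : BT} : modern (T, S) ↔ tle (shift T) S := by
  rw [modern, tle_node_iff]
  constructor
  · rintro ⟨A, B, h, hA, hB⟩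
    obtain rfl := tle_leaf_iff.1 hA
    rwa [h.eq_dropLeftmost] at hB
  · exact fun h => ⟨leaf, shift T, leftSplit_dropLeftmost T leaf, tle_refl leaf, h⟩

end Shift

section Attach

/-- The number of nodes on the left branch. -/
def leftLength : BT → ℕ
  | leaf => 0
  | node l _ => leftLength l + 1

/-- Insert a node with left subtree `A` on the left branch of a tree, just below its `j` topmost
nodes, so that the part of the tree below them becomes the right subtree of the new node. For `j`
beyond the length of the left branch, the node is inserted at the bottom. -/
def attach (A : BT) : ℕ → BT → BT
  | 0, B => node A B
  | _ + 1, leaf => node A leaf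
  | j + 1, node X D => node (attach A j X) D

/-- Insert a node with left subtree `A` at the bottom of the left branch of `B`. -/
def graft (A B : BT) : BT := attach A (leftLength B) B

lemma graft_node (A X D : BT) : graft A (node X D) = node (graft A X) D := rfl

lemma leftSplit_attach (A : BT) (j : ℕ) (B : BT) : LeftSplit (attach A j B) A B := by
  induction j generalizing B with
  | zero => exact .root A B
  | succ j ih =>
    cases B with
    | leaf => exact .root A leaf
    | node X D => exact (ih X).left D

lemma LeftSplit.exists_attach {T A B : BT} (h : LeftSplit T A B) :
    ∃ j ≤ leftLength B, attach A j B = T := by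
  induction h with
  | root A B => exact ⟨0, Nat.zero_le _, rfl⟩
  | left D _ ih =>
    obtain ⟨j, hj, rfl⟩ := ih
    exact ⟨j + 1, Nat.succ_le_succ hj, rfl⟩

lemma leftLength_attach {A B : BT} {j : ℕ} (hj : j ≤ leftLength B) :
    leftLength (attach A j B) = leftLength A + j + 1 := by
  induction j generalizing B with
  | zero => rfl
  | succ j ih =>
    cases B with
    | leaf => simp [leftLength] at hj
    | node X D => simp only [attach, leftLength, ih (Nat.le_of_succ_le_succ hj)]; omega

lemma attach_inj {A B A' B' : BT} {i j : ℕ} (hi : i ≤ leftLength B) (hj : j ≤ leftLength B')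
    (hsize : A.size = A'.size) (h : attach A i B = attach A' j B') :
    A = A' ∧ i = j ∧ B = B' := by
  obtain ⟨rfl, rfl⟩ := (leftSplit_attach A i B).unique (h ▸ leftSplit_attach A' j B') hsize
  have := leftLength_attach (A := A) hi
  rw [h, leftLength_attach hj] at this
  exact ⟨rfl, by omega, rfl⟩

lemma leftSplit_graft_node (X Y D : BT) :
    LeftSplit (graft X (node Y D)) (node X leaf) (dropLeftmost (node Y D)) := by
  induction Y generalizing D with
  | leaf => exact .root (node X leaf) D
  | node Z E ih _ => exact (ih E).left D

lemma dropLeftmost_graft (X Y B : BT) :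
    dropLeftmost (graft (node X Y) B) = graft (dropLeftmost (node X Y)) B := by
  refine (LeftSplit.eq_dropLeftmost ?_).symm
  induction B with
  | leaf => exact (leftSplit_dropLeftmost X Y).left leaf
  | node Z D ih _ => exact ih.left D

lemma shift_attach_leaf (j : ℕ) (B : BT) : shift (attach leaf j B) = node B leaf :=
  ((leftSplit_attach leaf j B).left leaf).eq_dropLeftmost.symm

lemma leftSplit_shift_attach_leaf (j : ℕ) (B : BT) :
    LeftSplit (shift (attach leaf j B)) leaf (shift B) :=
  shift_attach_leaf j B ▸ leftSplit_dropLeftmost B leaf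

lemma leftSplit_shift_graft {A : BT} (hA : A ≠ leaf) (B : BT) :
    LeftSplit (shift (graft A B)) (shift A) (shift B) := by
  obtain _ | ⟨X, Y⟩ := A
  · exact absurd rfl hA
  cases B with
  | leaf => exact .root (shift (node X Y)) leaf
  | node Z D =>
    have shift_graft : shift (graft (node X Y) (node Z D)) =
        node (graft (dropLeftmost (node X Y)) (node Z D)) leaf := by
      rw [← dropLeftmost_graft]
      rfl
    rw [shift_graft]
    exact (leftSplit_graft_node _ Z D).left leaf

lemma LeftSplit.exists_replace_right {T D A B : BT} (h : LeftSplit (node T D) A B) (D' : BT) :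
    ∃ B', LeftSplit (node T D') A B' := by
  cases h with
  | root => exact ⟨D', .root T D'⟩
  | left _ h => exact ⟨_, h.left D'⟩

lemma LeftSplit.eq_graft_of_shift {T A B A' C : BT} (h : LeftSplit T A B) (hA : A ≠ leaf)
    (hshift : LeftSplit (shift T) A' C) (hsize : A'.size = A.size) : T = graft A B := by
  induction h generalizing A' C with
  | root A B =>
    obtain _ | ⟨X, Y⟩ := A
    · exact absurd rfl hA
    -- The left subtrees on the left branch of `shift T` have size `A.size + B.size`, then at most
    -- `A.size - 1`; so one of size `A.size` exists only if `B` is the leaf.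
    have size_drop := (leftSplit_dropLeftmost X Y).size_eq
    cases hshift with
    | root =>
      have : B.size = 0 := by simp only [dropLeftmost, size] at hsize size_drop; omega
      rw [size_eq_zero_iff.1 this]
      rfl
    | left _ hshift =>
      cases hshift with
      | root => simp only [size] at hsize size_drop; omega
      | left _ hshift => have := hshift.size_eq; simp only [size] at *; omega
  | @left T A B D h ih =>
    obtain _ | ⟨X, Y⟩ := T
    · cases h
    have size_T := h.size_eq
    have size_drop := (leftSplit_dropLeftmost X Y).size_eq
    cases hshift with
    | root => simp only [dropLeftmost, size] at *; omega
    | left _ hshift =>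
      obtain ⟨C', hshift'⟩ := hshift.exists_replace_right leaf
      rw [ih hA hshift' hsize, graft_node]

end Attach

section TreesOfSize

open Finset.HasAntidiagonal (antidiagonal mem_antidiagonal)

lemma finite_setOf_size_le (n : ℕ) : {T : BT | T.size ≤ n}.Finite := by
  induction n with
  | zero =>
    exact (Set.finite_singleton leaf).subset fun T hT => size_eq_zero_iff.1 (Nat.le_zero.1 hT)
  | succ n ih =>
    refine ((ih.image2 node ih).insert leaf).subset ?_
    rintro (_ | ⟨L, R⟩) hT
    · exact Set.mem_insert leaf _
    · simp only [Set.mem_ofPred_eq, size] at hT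
      exact Or.inr ⟨L, by simp only [Set.mem_ofPred_eq]; omega, R,
        by simp only [Set.mem_ofPred_eq]; omega, rfl⟩

/-- The finset of all binary trees with `n` nodes. -/
noncomputable def ofSize (n : ℕ) : Finset BT :=
  ((finite_setOf_size_le n).subset fun _ => le_of_eq : {T : BT | T.size = n}.Finite).toFinset

lemma mem_ofSize {n : ℕ} {T : BT} : T ∈ ofSize n ↔ T.size = n := by
  simp [ofSize]

lemma ofSize_zero : ofSize 0 = {leaf} := by
  ext T
  rw [mem_ofSize, size_eq_zero_iff, Finset.mem_singleton]

lemma sum_ofSize_succ {M : Type*} [AddCommMonoid M] (f : BT → M) (n : ℕ) :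
    ∑ S ∈ ofSize (n + 1), f S =
      ∑ ij ∈ antidiagonal n, ∑ L ∈ ofSize ij.1, ∑ R ∈ ofSize ij.2, f (node L R) := by
  simp only [← Finset.sum_product', Finset.sum_sigma']
  symm
  refine Finset.sum_nbij (fun x => node x.2.1 x.2.2) ?_ ?_ ?_ fun _ _ => rfl
  · rintro ⟨⟨i, j⟩, L, R⟩ h
    simp only [Finset.mem_sigma, mem_antidiagonal, Finset.mem_product, mem_ofSize] at h
    simp only [mem_ofSize, size]
    omega
  · rintro ⟨⟨i, j⟩, L, R⟩ h ⟨⟨i', j'⟩, L', R'⟩ h' heq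
    simp only [Finset.mem_coe, Finset.mem_sigma, Finset.mem_product, mem_ofSize] at h h'
    obtain ⟨-, rfl, rfl⟩ := h
    obtain ⟨-, rfl, rfl⟩ := h'
    cases heq
    rfl
  · rintro (_ | ⟨L, R⟩) h
    · simp [mem_ofSize, size] at h
    · refine ⟨⟨(L.size, R.size), L, R⟩, ?_, rfl⟩
      simpa [mem_ofSize, size] using h

end TreesOfSize

section ModernIntervals

open scoped Classical in
/-- The trees `T` for which `(T, S)` is a modern Tamari interval. -/
noncomputable def modernLower (S : BT) : Finset BT :=
  {T ∈ ofSize S.size | tle T S ∧ modern (T, S)}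

lemma mem_modernLower {S T : BT} : T ∈ modernLower S ↔ tle T S ∧ tle (shift T) S := by
  simp only [modernLower, Finset.mem_filter, mem_ofSize, modern_iff, and_iff_right_iff_imp]
  exact fun h => h.1.size_eq

lemma size_of_mem_modernLower {S T : BT} (h : T ∈ modernLower S) : T.size = S.size :=
  (mem_modernLower.1 h).1.size_eq

lemma modernLower_leaf : modernLower leaf = {leaf} := by
  ext T
  rw [mem_modernLower, tle_leaf_iff, Finset.mem_singleton, and_iff_left_iff_imp]
  rintro rfl
  exact tle_refl leaf

theorem mem_modernLower_node {T L R : BT} (hL : L ≠ leaf) :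
    T ∈ modernLower (node L R) ↔ ∃ A ∈ modernLower L, ∃ B ∈ modernLower R, graft A B = T := by
  have ne_leaf {A : BT} (h : tle A L) : A ≠ leaf := by
    rintro rfl
    exact hL (size_eq_zero_iff.1 h.size_eq.symm)
  simp only [mem_modernLower, tle_node_iff]
  constructor
  · rintro ⟨⟨A, B, hsplit, hA, hB⟩, A', B', hshift, hA', hB'⟩
    obtain rfl := hsplit.eq_graft_of_shift (ne_leaf hA) hshift (hA'.size_eq.trans hA.size_eq.symm)
    obtain ⟨rfl, rfl⟩ := hshift.unique (leftSplit_shift_graft (ne_leaf hA) B)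
      (by rw [size_shift, hA'.size_eq, hA.size_eq])
    exact ⟨A, ⟨hA, hA'⟩, B, ⟨hB, hB'⟩, rfl⟩
  · rintro ⟨A, ⟨hA, hA'⟩, B, ⟨hB, hB'⟩, rfl⟩
    exact ⟨⟨A, B, leftSplit_attach A _ B, hA, hB⟩,
      shift A, shift B, leftSplit_shift_graft (ne_leaf hA) B, hA', hB'⟩

theorem mem_modernLower_leaf_node {T R : BT} :
    T ∈ modernLower (node leaf R) ↔
      ∃ B ∈ modernLower R, ∃ j ≤ leftLength B, attach leaf j B = T := by
  simp only [mem_modernLower, tle_node_iff, tle_leaf_iff]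
  constructor
  · rintro ⟨⟨_, B, hsplit, rfl, hB⟩, _, B', hshift, rfl, hB'⟩
    obtain ⟨j, hj, rfl⟩ := hsplit.exists_attach
    obtain ⟨-, rfl⟩ := hshift.unique (leftSplit_shift_attach_leaf j B) rfl
    exact ⟨B, ⟨hB, hB'⟩, j, hj, rfl⟩
  · rintro ⟨B, ⟨hB, hB'⟩, j, -, rfl⟩
    exact ⟨⟨leaf, B, leftSplit_attach leaf j B, rfl, hB⟩,
      leaf, shift B, leftSplit_shift_attach_leaf j B, rfl, hB'⟩

lemma ncard_modern_intervals (n : ℕ) :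
    {p : BT × BT | interval p n ∧ modern p}.ncard = ∑ S ∈ ofSize n, (modernLower S).card := by
  rw [← Finset.card_sigma, ← Set.ncard_coe_finset]
  refine Set.ncard_congr (fun p _ => ⟨p.2, p.1⟩) ?_ ?_ ?_
  · rintro ⟨T, S⟩ ⟨⟨-, hS, hle⟩, hmodern⟩
    simpa [mem_ofSize, mem_modernLower] using ⟨hS, hle, modern_iff.1 hmodern⟩
  · rintro ⟨T, S⟩ ⟨T', S'⟩ - - h
    cases h
    rfl
  · rintro ⟨S, T⟩ h
    simp only [Finset.coe_sigma, Set.mem_sigma_iff, Finset.mem_coe, mem_ofSize] at h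
    have ⟨hle, hshift⟩ := mem_modernLower.1 h.2
    exact ⟨(T, S), ⟨⟨hle.size_eq.trans h.1, h.1, hle⟩, modern_iff.2 hshift⟩, rfl⟩

end ModernIntervals

section GeneratingFunction

open scoped Polynomial
open Polynomial (X eval_finsetSum)
open Finset.HasAntidiagonal (antidiagonal mem_antidiagonal)

/-- The generating polynomial of the modern intervals with upper tree `S`, by the length of the left
branch of the lower tree. -/
noncomputable def lowerPoly (S : BT) : ℤ[X] := ∑ T ∈ modernLower S, X ^ leftLength T

lemma eval_one_lowerPoly (S : BT) : (lowerPoly S).eval 1 = (modernLower S).card := by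
  simp [lowerPoly, eval_finsetSum]

lemma lowerPoly_leaf : lowerPoly leaf = 1 := by
  simp [lowerPoly, modernLower_leaf, leftLength]

lemma lowerPoly_node {L : BT} (hL : L ≠ leaf) (R : BT) :
    lowerPoly (node L R) = X * (lowerPoly L * lowerPoly R) := by
  rw [lowerPoly, lowerPoly, lowerPoly, Finset.sum_mul_sum, ← Finset.sum_product', Finset.mul_sum]
  symm
  refine Finset.sum_nbij (fun x => graft x.1 x.2) ?_ ?_ ?_ ?_
  · rintro ⟨A, B⟩ h
    obtain ⟨hA, hB⟩ := Finset.mem_product.1 h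
    exact (mem_modernLower_node hL).2 ⟨A, hA, B, hB, rfl⟩
  · rintro ⟨A, B⟩ h ⟨A', B'⟩ h' heq
    have size_eq : A.size = A'.size := by
      rw [size_of_mem_modernLower (Finset.mem_product.1 h).1,
        size_of_mem_modernLower (Finset.mem_product.1 h').1]
    obtain ⟨rfl, -, rfl⟩ := attach_inj le_rfl le_rfl size_eq heq
    rfl
  · intro T hT
    obtain ⟨A, hA, B, hB, rfl⟩ := (mem_modernLower_node hL).1 hT
    exact ⟨(A, B), Finset.mem_product.2 ⟨hA, hB⟩, rfl⟩
  · rintro ⟨A, B⟩ -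
    rw [graft, leftLength_attach le_rfl]
    ring

lemma lowerPoly_leaf_node (R : BT) :
    lowerPoly (node leaf R) =
      ∑ B ∈ modernLower R, ∑ j ∈ Finset.range (leftLength B + 1), X ^ (j + 1) := by
  rw [lowerPoly, Finset.sum_sigma']
  symm
  refine Finset.sum_nbij (fun x => attach leaf x.2 x.1) ?_ ?_ ?_ ?_
  · rintro ⟨B, j⟩ h
    obtain ⟨hB, hj⟩ := Finset.mem_sigma.1 h
    exact mem_modernLower_leaf_node.2 ⟨B, hB, j, Finset.mem_range_succ_iff.1 hj, rfl⟩
  · rintro ⟨B, j⟩ h ⟨B', j'⟩ h' heq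
    obtain ⟨-, rfl, rfl⟩ := attach_inj (Finset.mem_range_succ_iff.1 (Finset.mem_sigma.1 h).2)
      (Finset.mem_range_succ_iff.1 (Finset.mem_sigma.1 h').2) rfl heq
    rfl
  · intro T hT
    obtain ⟨B, hB, j, hj, rfl⟩ := mem_modernLower_leaf_node.1 hT
    exact ⟨⟨B, j⟩, Finset.mem_sigma.2 ⟨hB, Finset.mem_range_succ_iff.2 hj⟩, rfl⟩
  · rintro ⟨B, j⟩ h
    rw [leftLength_attach (Finset.mem_range_succ_iff.1 (Finset.mem_sigma.1 h).2), leftLength,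
      zero_add]

lemma X_sub_one_mul_lowerPoly_leaf_node (R : BT) :
    (X - 1) * lowerPoly (node leaf R) =
      X * (X * lowerPoly R - Polynomial.C ((lowerPoly R).eval 1)) := by
  have geometric (m : ℕ) :
      (X - 1) * ∑ j ∈ Finset.range (m + 1), (X : ℤ[X]) ^ (j + 1) = X * (X * X ^ m - 1) := by
    rw [← pow_succ', ← mul_geom_sum, Finset.mul_sum, Finset.mul_sum, Finset.mul_sum]
    exact Finset.sum_congr rfl fun j _ => by ring
  have card_eq : Polynomial.C ((lowerPoly R).eval 1) = ∑ _T ∈ modernLower R, (1 : ℤ[X]) := by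
    simp [eval_one_lowerPoly]
  rw [lowerPoly_leaf_node, card_eq, lowerPoly, Finset.mul_sum, Finset.mul_sum,
    ← Finset.sum_sub_distrib, Finset.mul_sum]
  exact Finset.sum_congr rfl fun B _ => geometric (leftLength B)

open scoped Classical in
lemma X_sub_one_mul_lowerPoly_node (L R : BT) :
    (X - 1) * lowerPoly (node L R) = X * (X - 1) * (lowerPoly L * lowerPoly R) +
      if L = leaf then X * (lowerPoly R - Polynomial.C ((lowerPoly R).eval 1)) else 0 := by
  split_ifs with hL
  · rw [hL, X_sub_one_mul_lowerPoly_leaf_node, lowerPoly_leaf]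
    ring
  · rw [lowerPoly_node hL]
    ring

/-- The generating polynomial of the modern intervals of size `n`, by the length of the left branch
of the lower tree. -/
noncomputable def modernPoly (n : ℕ) : ℤ[X] := ∑ S ∈ ofSize n, lowerPoly S

lemma eval_one_modernPoly (n : ℕ) :
    (modernPoly n).eval 1 = {p : BT × BT | interval p n ∧ modern p}.ncard := by
  simp [modernPoly, eval_finsetSum, eval_one_lowerPoly, ncard_modern_intervals]

lemma modernPoly_zero : modernPoly 0 = 1 := by
  simp [modernPoly, ofSize_zero, lowerPoly_leaf]

lemma sum_ofSize_leaf_left {M : Type*} [AddCommMonoid M] [DecidableEq BT] (f : BT → M) (n : ℕ) :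
    ∑ ij ∈ antidiagonal n, ∑ L ∈ ofSize ij.1, ∑ R ∈ ofSize ij.2,
      (if L = leaf then f R else 0) = ∑ R ∈ ofSize n, f R := by
  rw [Finset.sum_eq_single (0, n)]
  · simp [ofSize_zero]
  · rintro ⟨i, j⟩ hij hne
    refine Finset.sum_eq_zero fun L hL => Finset.sum_eq_zero fun R _ => if_neg ?_
    rintro rfl
    obtain rfl : 0 = i := mem_ofSize.1 hL
    exact hne (by rw [← mem_antidiagonal.1 hij, zero_add])
  · simp

theorem X_sub_one_mul_modernPoly_succ (n : ℕ) :
    (X - 1) * modernPoly (n + 1) =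
      X * (X - 1) * ∑ ij ∈ antidiagonal n, modernPoly ij.1 * modernPoly ij.2 +
        X * (modernPoly n - Polynomial.C ((modernPoly n).eval 1)) := by
  classical
  have product (ij : ℕ × ℕ) : modernPoly ij.1 * modernPoly ij.2 =
      ∑ L ∈ ofSize ij.1, ∑ R ∈ ofSize ij.2, lowerPoly L * lowerPoly R :=
    Finset.sum_mul_sum ..
  have correction : X * (modernPoly n - Polynomial.C ((modernPoly n).eval 1)) =
      ∑ R ∈ ofSize n, X * (lowerPoly R - Polynomial.C ((lowerPoly R).eval 1)) := by
    rw [modernPoly, eval_finsetSum, map_sum, ← Finset.sum_sub_distrib, Finset.mul_sum]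
  rw [correction, ← sum_ofSize_leaf_left, modernPoly, sum_ofSize_succ]
  simp only [product, Finset.mul_sum, ← Finset.sum_add_distrib, X_sub_one_mul_lowerPoly_node]

end GeneratingFunction

section Count

open PowerSeries

lemma catalyticEq_modernPoly :
    CatalyticEq (mk modernPoly) (mk fun n => (modernPoly n).eval 1) :=
  catalyticEq_iff_coeff.2 ⟨by simp only [coeff_mk, modernPoly_zero],
    fun n => by simpa only [coeff_mk] using X_sub_one_mul_modernPoly_succ n⟩

theorem eight_mul_eval_one_modernPoly_succ (n : ℕ) :
    8 * (modernPoly (n + 1)).eval 1 =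
      2 ^ (n + 2) * (4 * (catalan (n + 1) : ℤ) - catalan (n + 2)) := by
  have hv : 1 + 2 * (X * catalanRescaled ^ 2) = catalanRescaled := catalanRescaled_eq.symm
  obtain ⟨F, hF⟩ := exists_catalyticEq (v := X * catalanRescaled ^ 2) (by rw [hv])
  rw [← eight_mul_coeff_succ_one_add_sub_sq hv, ← catalyticEq_modernPoly.right_unique hF, coeff_mk]

end Count

end BT

theorem count_modern_intervals (n : ℕ) (hn : 1 ≤ n) :
    (n + 1) * (n + 2) * Set.ncard {p : BT × BT | BT.interval p n ∧ BT.modern p} =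
      3 * 2 ^ (n - 1) * Nat.choose (2 * n) n := by
  obtain ⟨m, rfl⟩ := Nat.exists_eq_add_of_le' hn
  have count := BT.eight_mul_eval_one_modernPoly_succ m
  rw [BT.eval_one_modernPoly] at count
  have recurrence := congrArg (Nat.cast (R := ℤ)) (add_two_mul_catalan_succ (m + 1))
  have closed_form := congrArg (Nat.cast (R := ℤ)) (succ_mul_catalan_eq_centralBinom (m + 1))
  rw [← Nat.centralBinom, Nat.add_sub_cancel]
  zify
  push_cast at recurrence closed_form
  refine mul_left_cancel₀ (by norm_num : (8 : ℤ) ≠ 0) ?_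
  linear_combination (m + 2) * (m + 3) * count - 2 ^ (m + 2) * (m + 2) * recurrence +
    24 * 2 ^ m * closed_form
end

section
/- For n ≥ 1, the number of infinitely modern Tamari intervals of size n equals (1/(2n+1)) · C(3n, n). -/
/-!
In terms of bracket-vectors `b`, an interval `(T, T')` is infinitely modern if and only if
`b_T(j) ≤ b_T'(i)` for all `i ≤ j`. Fix an upper tree `T' = (L, R)`. If `L = ε`, the possible `T`
are the trees whose first node can be deleted to leave a lower tree for `R`; if `L ≠ ε`, then
`b_T` vanishes from the last node of `L` on, so `T` is a lower tree for `L` with `|R| + 1` nodes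
added above its root. With `u` marking the length `d` of the left branch of the lower tree, a
first node can be inserted in `d + 1` ways, with new lengths `1, …, d + 1`. The generating function
`F` therefore satisfies `F = 1 + x u (E + (F - 1) c)` and `(1 - u) E = A - u F`, where `A = F(1)`,
`E` has the weight `1 + u + ⋯ + u ^ d` in place of `u ^ d`, and `c = 1 + x u c ^ 2` is the Catalan
series in `x u`. Eliminating `E` gives `(F - 1) / (x u) * (c - u) = c ^ 2 (A - u)`. Since
`(F - 1) / (x u)` is invertible, substituting `u = A` makes `c = A`, and the equation of `c` becomes
`A = 1 + x A ^ 3`.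
-/

theorem getD_append_cons {α : Type*} (l m : List α) (x d : α) (i : ℕ) :
    (l ++ x :: m).getD (l.length + 1 + i) d = m.getD i d := by
  rw [List.getD_append_right _ _ _ _ (by omega), add_assoc, Nat.add_sub_cancel_left, add_comm 1,
    List.getD_cons_succ]

section PowerSeries

open PowerSeries

theorem catalytic_kernel_eq {R : Type*} [CommRing R] {x u f e a c : R}
    (hc : c = 1 + x * u * c ^ 2) (hf : f = 1 + x * u * (e + (f - 1) * c))
    (he : (1 - u) * e = a - u * f) :
    (e + (f - 1) * c) * (c - u) = c ^ 2 * (a - u) := by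
  obtain ⟨K, hK⟩ : ∃ K, K = 1 - u + x * u * (u - (1 - u) * c) := ⟨_, rfl⟩
  have hfK : (e + (f - 1) * c) * K = a - u := by
    rw [hK]
    linear_combination he + ((1 - u) * c - u) * hf
  have hcK : c ^ 2 * K = c - u := by
    rw [hK]
    linear_combination ((1 - u) * c - u) * hc
  linear_combination c ^ 2 * hfK - (e + (f - 1) * c) * hcK

-- Modulo `a - u` the three elements `a`, `u`, `c` coincide.
theorem sub_dvd_sub_of_sub_dvd {R : Type*} [CommRing R] {x u a c : R}
    (hc : c = 1 + x * u * c ^ 2) (h : a - u ∣ c - u) : a - u ∣ a - (1 + x * a ^ 3) := by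
  have hau : a - u ∣ a - u := dvd_rfl
  rw [← Ideal.mem_span_singleton, ← Ideal.Quotient.eq] at h hau ⊢
  have hc' := congrArg (Ideal.Quotient.mk (Ideal.span {a - u})) hc
  simp only [map_add, map_mul, map_pow, map_one, h, hau] at hc' ⊢
  linear_combination hc'

theorem eq_zero_of_map_C_sub_C_X_dvd {R : Type*} [CommRing R] {a c : R⟦X⟧}
    (h : map Polynomial.C a - C Polynomial.X ∣ map Polynomial.C c) : c = 0 := by
  nontriviality R
  obtain ⟨q, hq⟩ := h
  have hq_zero (n : ℕ) : coeff n q = 0 := by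
    induction n using Nat.strong_induction_on with
    | _ n ih =>
      have hn : Polynomial.C (coeff n c) =
          (Polynomial.C (coeff 0 a) - Polynomial.X) * coeff n q := by
        have := congrArg (coeff n) hq
        rw [coeff_mul, Finset.sum_eq_single (0, n)] at this
        · simpa only [map_sub, coeff_map, coeff_zero_C] using this
        · intro ij hij hne
          rw [Finset.HasAntidiagonal.mem_antidiagonal] at hij
          rw [ih ij.2, mul_zero]
          by_contra hlt
          exact hne (Prod.ext (by simp only; omega) (by simp only; omega))
        · simp
      by_contra hne
      have hdeg := congrArg Polynomial.natDegree hn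
      rw [← neg_sub, neg_mul, Polynomial.natDegree_neg, Polynomial.natDegree_C,
        (Polynomial.monic_X_sub_C _).natDegree_mul' hne, Polynomial.natDegree_X_sub_C] at hdeg
      omega
  have hq0 : q = 0 := PowerSeries.ext fun n => by simpa using hq_zero n
  rw [hq0, mul_zero] at hq
  exact (map_eq_zero_iff _ (map_injective _ Polynomial.C_injective)).1 hq

theorem coeff_succ_pow_succ {R : Type*} [CommRing R] {p : ℕ} {U : R⟦X⟧} (hU : U = 1 + X * U ^ p)
    (n k : ℕ) :
    coeff (n + 1) (U ^ (k + 1)) = coeff (n + 1) (U ^ k) + coeff n (U ^ (p + k)) := by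
  have hpow : U ^ (k + 1) = U ^ k + X * U ^ (p + k) := by linear_combination U ^ k * hU
  rw [hpow, map_add, coeff_succ_X_mul]

theorem coeff_pow_of_eq_one_add_X_mul_pow {R : Type*} [CommRing R] [IsDomain R] [CharZero R]
    {p : ℕ} {U : R⟦X⟧} (hU : U = 1 + X * U ^ p) (n k : ℕ) :
    ((p * n + k : ℕ) : R) * coeff n (U ^ k) = k * (p * n + k).choose n := by
  induction n generalizing k with
  | zero =>
    have hU₀ : constantCoeff U = 1 := by rw [hU]; simp
    simp [hU₀]
  | succ n ihn =>
    induction k with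
    | zero => simp [coeff_one]
    | succ k ihk =>
      have hN : p * n + (p + k) = p * (n + 1) + k := by ring
      have hβ := ihn (p + k)
      have hNR : ((p * (n + 1) + k : ℕ) : R) = p * (n + 1) + k := by push_cast; rfl
      rcases (p * (n + 1) + k).eq_zero_or_pos with h | hpos
      · obtain ⟨rfl, rfl⟩ : p = 0 ∧ k = 0 := by simpa using h
        rw [hU]
        cases n <;> simp [coeff_X, Nat.choose_eq_zero_of_lt]
      rw [hN] at hβ
      rw [coeff_succ_pow_succ hU, ← add_assoc, Nat.choose_succ_succ]
      generalize p * (n + 1) + k = N at *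
      have hchoose : ((N : R) + 1) * N.choose n =
          (N.choose n + N.choose (n + 1)) * (n + 1) := by
        exact_mod_cast Nat.add_one_mul_choose_eq N n
      have hN₀ : (N : R) * (n + 1) ≠ 0 := by
        exact_mod_cast (Nat.mul_pos hpos n.succ_pos).ne'
      refine mul_left_cancel₀ hN₀ ?_
      push_cast at hβ ⊢
      linear_combination (n + 1) * (N + 1) * (ihk + hβ) + (N - k) * hchoose -
        (N + 1) * N.choose n * hNR

end PowerSeries

namespace BT

section Bracket

theorem length_bracket (T : BT) : T.bracket.length = T.size := by
  induction T with
  | leaf => rfl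
  | node l r ihl ihr => simp [bracket, size, ihl, ihr, add_assoc]

/-- The `i`-th entry (from `0`) of the bracket-vector of `T`, set to `0` past its end. -/
def bracketAt (T : BT) (i : ℕ) : ℕ := T.bracket.getD i 0

theorem bracketAt_of_size_le {T : BT} {i : ℕ} (h : T.size ≤ i) : T.bracketAt i = 0 :=
  List.getD_eq_default _ _ (T.length_bracket.trans_le h)

theorem bracketAt_node_of_lt {l : BT} (r : BT) {i : ℕ} (h : i < l.size) :
    (node l r).bracketAt i = l.bracketAt i :=
  List.getD_append _ _ _ _ (l.length_bracket.symm ▸ h)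

theorem bracketAt_node_size (l r : BT) : (node l r).bracketAt l.size = r.size := by
  simp [bracketAt, bracket, ← length_bracket l]

theorem bracketAt_node_add (l r : BT) (i : ℕ) :
    (node l r).bracketAt (l.size + 1 + i) = r.bracketAt i := by
  rw [bracketAt, bracket, ← length_bracket l, getD_append_cons, bracketAt]

theorem add_bracketAt_lt_size {T : BT} {i : ℕ} (h : i < T.size) : i + T.bracketAt i < T.size := by
  induction T generalizing i with
  | leaf => simp [size] at h
  | node l r ihl ihr =>
    simp only [size] at h ⊢
    rcases lt_trichotomy i l.size with hi | rfl | hi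
    · have := ihl hi
      rw [bracketAt_node_of_lt r hi]
      omega
    · rw [bracketAt_node_size]
      omega
    · obtain ⟨j, rfl⟩ := Nat.exists_eq_add_of_le (Nat.succ_le_of_lt hi)
      have := ihr (i := j) (by omega)
      rw [Nat.succ_eq_add_one, bracketAt_node_add]
      omega

theorem forall₂_le_bracket_iff {T T' : BT} :
    List.Forall₂ (· ≤ ·) T.bracket T'.bracket ↔
      T.size = T'.size ∧ ∀ i, T.bracketAt i ≤ T'.bracketAt i := by
  simp only [List.forall₂_iff_get, length_bracket, bracketAt]
  refine and_congr_right fun hs => ⟨fun h i => ?_, fun h i h₁ h₂ => ?_⟩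
  · by_cases hi : i < T.size
    · simpa [length_bracket, hi, hs ▸ hi] using h i hi (hs ▸ hi)
    · simp [length_bracket, hi]
  · simpa [length_bracket, h₁, h₂] using h i

end Bracket

section Tamari

theorem Rot.forall₂_le_bracket {T T' : BT} (h : Rot T T') :
    List.Forall₂ (· ≤ ·) T.bracket T'.bracket := by
  have refl (l : List ℕ) : List.Forall₂ (· ≤ ·) l l := List.forall₂_refl l
  induction h with
  | rotate A B C =>
    simp only [bracket, List.append_assoc, List.cons_append, size]
    exact List.rel_append (refl _) (.cons (by omega) (refl _))
  | left r _ ih => exact List.rel_append ih (refl _)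
  | right l _ ih =>
    have hsize := (forall₂_le_bracket_iff.1 ih).1
    exact List.rel_append (refl _) (.cons hsize.le ih)

theorem tle.node_left_s11 {l l' : BT} (h : tle l l') (r : BT) : tle (node l r) (node l' r) :=
  h.lift (node · r) fun _ _ => Rot.left r

theorem tle.node_right_s11 {r r' : BT} (h : tle r r') (l : BT) : tle (node l r) (node l r') :=
  h.lift (node l) fun _ _ => Rot.right l

-- Right rotations bring node `k` to the root as soon as no earlier node has `k` in its right
-- subtree.
theorem exists_tle_node {T : BT} {k : ℕ} (hk : k < T.size)
    (h : ∀ i < k, i + T.bracketAt i < k) :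
    ∃ A B : BT, A.size = k ∧ tle T (node A B) ∧
      ∃ x, T.bracket = A.bracket ++ x :: B.bracket := by
  induction T generalizing k with
  | leaf => simp [size] at hk
  | node l r ihl =>
    rcases lt_trichotomy k l.size with hkl | rfl | hkl
    · obtain ⟨A, B, hA, hle, x, hx⟩ := ihl hkl fun i hi => by
        simpa only [bracketAt_node_of_lt r (hi.trans hkl)] using h i hi
      refine ⟨A, node B r, hA, (hle.node_left_s11 r).tail (Rot.rotate A B r), x, ?_⟩
      simp [bracket, hx]
    · exact ⟨l, r, rfl, .refl, r.size, rfl⟩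
    · have := h _ hkl
      simp only [size, bracketAt_node_size] at hk this
      omega

theorem tle_of_bracketAt_le {T T' : BT} (hs : T.size = T'.size)
    (h : ∀ i, T.bracketAt i ≤ T'.bracketAt i) : tle T T' := by
  induction T' generalizing T with
  | leaf =>
    cases T with
    | leaf => exact .refl
    | node l r => simp [size] at hs
  | node L R ihL ihR =>
    simp only [size] at hs
    obtain ⟨A, B, hA, hle, x, hx⟩ := exists_tle_node (T := T) (k := L.size) (by omega)
      fun i hi => by
        have := h i
        rw [bracketAt_node_of_lt R hi] at this
        have := add_bracketAt_lt_size hi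
        omega
    have hlen := congrArg List.length hx
    simp only [length_bracket, List.length_append, List.length_cons] at hlen
    have hAL : tle A L := ihL hA fun i => by
      rcases lt_or_ge i A.size with hi | hi
      · have := h i
        rwa [bracketAt_node_of_lt R (hA ▸ hi), bracketAt, hx,
          List.getD_append _ _ _ _ (A.length_bracket.symm ▸ hi)] at this
      · simp [bracketAt_of_size_le hi]
    have hBR : tle B R := ihR (by omega) fun i => by
      have := h (L.size + 1 + i)
      rwa [bracketAt_node_add, bracketAt, hx, ← hA, ← length_bracket, getD_append_cons] at this
    exact (hle.trans (hAL.node_left_s11 B)).trans (hBR.node_right_s11 L)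

theorem tle_iff_bracketAt_le {T T' : BT} :
    tle T T' ↔ T.size = T'.size ∧ ∀ i, T.bracketAt i ≤ T'.bracketAt i := by
  refine ⟨fun h => ?_, fun h => tle_of_bracketAt_le h.1 h.2⟩
  induction h with
  | refl => exact ⟨rfl, fun _ => le_rfl⟩
  | tail _ hrot ih =>
    have hstep := forall₂_le_bracket_iff.1 hrot.forall₂_le_bracket
    exact ⟨ih.1.trans hstep.1, fun i => (ih.2 i).trans (hstep.2 i)⟩

end Tamari

section InfinitelyModern

/-- The operation `T ↦ (T, ε)`, which `riseF` applies to the lower tree. -/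
def raise (T : BT) : BT := node T leaf

theorem raise_injective : Function.Injective raise := fun _ _ h => (node.inj h).1

theorem size_iterate_raise (k : ℕ) (T : BT) : (raise^[k] T).size = T.size + k := by
  induction k generalizing T with
  | zero => rfl
  | succ k ih => simp [ih, raise, size, add_assoc, add_comm 1 k]

theorem bracketAt_node_leaf (T : BT) (i : ℕ) : (node T leaf).bracketAt i = T.bracketAt i := by
  rcases lt_trichotomy i T.size with hi | rfl | hi
  · exact bracketAt_node_of_lt leaf hi
  · rw [bracketAt_node_size, bracketAt_of_size_le le_rfl, size]
  · rw [bracketAt_of_size_le (by simpa [size] using hi), bracketAt_of_size_le hi.le]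

theorem bracketAt_iterate_raise (k : ℕ) (T : BT) (i : ℕ) :
    (raise^[k] T).bracketAt i = T.bracketAt i := by
  induction k generalizing T with
  | zero => rfl
  | succ k ih => rw [Function.iterate_succ_apply, ih, raise, bracketAt_node_leaf]

theorem size_iterate_node_leaf (k : ℕ) (T : BT) : ((node leaf)^[k] T).size = T.size + k := by
  induction k with
  | zero => rfl
  | succ k ih => simp [Function.iterate_succ_apply', ih, size, add_assoc]

theorem bracketAt_leaf_node_zero (R : BT) : (node leaf R).bracketAt 0 = R.size :=
  bracketAt_node_size leaf R

theorem bracketAt_leaf_node_succ (R : BT) (i : ℕ) :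
    (node leaf R).bracketAt (i + 1) = R.bracketAt i := by
  simpa [size, add_comm] using bracketAt_node_add leaf R i

theorem bracketAt_iterate_node_leaf_of_lt {k i : ℕ} (T : BT) (h : i < k) :
    ((node leaf)^[k] T).bracketAt i = T.size + (k - 1 - i) := by
  induction k generalizing i with
  | zero => simp at h
  | succ k ih =>
    rw [Function.iterate_succ_apply']
    cases i with
    | zero => rw [bracketAt_leaf_node_zero, size_iterate_node_leaf]; rfl
    | succ i => rw [bracketAt_leaf_node_succ, ih (by omega)]; omega

theorem bracketAt_iterate_node_leaf_add (k : ℕ) (T : BT) (i : ℕ) :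
    ((node leaf)^[k] T).bracketAt (i + k) = T.bracketAt i := by
  induction k with
  | zero => rfl
  | succ k ih => rw [Function.iterate_succ_apply', ← add_assoc, bracketAt_leaf_node_succ, ih]

theorem iterate_riseF (k : ℕ) (p : BT × BT) :
    riseF^[k] p = (raise^[k] p.1, (node leaf)^[k] p.2) :=
  congrFun (Prod.map_iterate raise (node leaf) k) p

theorem infModern_iff {T T' : BT} :
    infModern (T, T') ↔
      T.size = T'.size ∧ ∀ i j, i ≤ j → T.bracketAt j ≤ T'.bracketAt i := by
  simp only [infModern, iterate_riseF, tle_iff_bracketAt_le, size_iterate_raise,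
    size_iterate_node_leaf, bracketAt_iterate_raise, Nat.add_right_cancel_iff]
  constructor
  · refine fun h => ⟨(h 0).1, fun i j hij => ?_⟩
    obtain ⟨k, rfl⟩ := Nat.exists_eq_add_of_le hij
    simpa only [bracketAt_iterate_node_leaf_add] using (h k).2 (i + k)
  · refine fun ⟨hs, h⟩ k => ⟨hs, fun i => ?_⟩
    rcases lt_or_ge i k with hi | hi
    · rw [bracketAt_iterate_node_leaf_of_lt T' hi, ← hs]
      rcases lt_or_ge i T.size with hiT | hiT
      · have := add_bracketAt_lt_size hiT
        omega
      · simp [bracketAt_of_size_le hiT]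
    · obtain ⟨j, rfl⟩ := Nat.exists_eq_add_of_le' hi
      rw [bracketAt_iterate_node_leaf_add]
      exact h j _ (Nat.le_add_right j k)

theorem interval_and_infModern_iff {p : BT × BT} {n : ℕ} :
    interval p n ∧ infModern p ↔ p.2.size = n ∧ infModern p := by
  refine and_congr_left fun h => ⟨fun hp => hp.2.1, fun hn => ?_⟩
  have hle : tle p.1 p.2 := h 0
  exact ⟨(tle_iff_bracketAt_le.1 hle).1.trans hn, hn, hle⟩

theorem infModern_leaf_iff {T : BT} : infModern (T, leaf) ↔ T = leaf := by
  cases T <;> simp [infModern_iff, size, bracketAt, bracket]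

end InfinitelyModern

section Decomposition

/-- The tree obtained from `T` by deleting its first node in infix order and putting the right
subtree of that node in its place; `leaf` is sent to itself. -/
def dropFirst : BT → BT
  | leaf => leaf
  | node leaf r => r
  | node (node a c) r => node (dropFirst (node a c)) r

theorem bracket_dropFirst (T : BT) : T.dropFirst.bracket = T.bracket.tail := by
  induction T using dropFirst.induct with
  | case1 => rfl
  | case2 r => rfl
  | case3 a c r ih =>
    have hne : (node a c).bracket ≠ [] := by simp [bracket]
    rw [dropFirst, bracket, ih, bracket.eq_def (node _ r), List.tail_append_of_ne_nil hne]

theorem bracketAt_dropFirst (T : BT) (i : ℕ) :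
    T.dropFirst.bracketAt i = T.bracketAt (i + 1) := by
  simp [bracketAt, bracket_dropFirst, List.getD_eq_getElem?_getD]

theorem size_dropFirst (T : BT) : T.dropFirst.size = T.size - 1 := by
  rw [← length_bracket, bracket_dropFirst, List.length_tail, length_bracket]

theorem size_pos_of_ne_leaf {T : BT} (h : T ≠ leaf) : 0 < T.size := by
  cases T with
  | leaf => exact absurd rfl h
  | node l r => simp [size]

/-- All the trees that `dropFirst` sends to the argument: the new first node takes the place of one
of the subtrees hanging from the left branch, which becomes its right subtree. -/
def insertFirst : BT → List BT
  | leaf => [node leaf leaf]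
  | node l r => node leaf (node l r) :: (insertFirst l).map (node · r)

theorem mem_insertFirst {S T : BT} : T ∈ insertFirst S ↔ T ≠ leaf ∧ T.dropFirst = S := by
  induction S generalizing T with
  | leaf => rcases T with _ | ⟨_ | _, r⟩ <;> simp [insertFirst, dropFirst]
  | node l r ih =>
    rcases T with _ | ⟨_ | ⟨a, c⟩, r'⟩ <;> simp [insertFirst, dropFirst, ih, eq_comm (a := r)]

theorem nodup_insertFirst (S : BT) : (insertFirst S).Nodup := by
  induction S with
  | leaf => simp [insertFirst]
  | node l r ih =>
    rw [insertFirst, List.nodup_cons]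
    exact ⟨by simp [mem_insertFirst], ih.map fun _ _ h => (node.inj h).1⟩

theorem infModern_leaf_node_iff {T R : BT} :
    infModern (T, node leaf R) ↔ T ≠ leaf ∧ infModern (T.dropFirst, R) := by
  by_cases hT : T = leaf
  · simp [hT, infModern_iff, size]
  have hpos := size_pos_of_ne_leaf hT
  simp only [infModern_iff, bracketAt_dropFirst, size_dropFirst, size, ne_eq, hT,
    not_false_eq_true, true_and]
  have hsize : T.size - 1 = R.size ↔ T.size = 0 + R.size + 1 := by omega
  rw [hsize]
  refine and_congr_right fun hs => ⟨fun h i j hij => ?_, fun h i j hij => ?_⟩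
  · simpa only [bracketAt_leaf_node_succ] using h (i + 1) (j + 1) (by omega)
  · cases i with
    | zero =>
      rw [bracketAt_leaf_node_zero]
      rcases lt_or_ge j T.size with hj | hj
      · have := add_bracketAt_lt_size hj
        omega
      · simp [bracketAt_of_size_le hj]
    | succ i =>
      obtain ⟨j, rfl⟩ := Nat.exists_eq_add_of_le' (Nat.one_le_of_lt hij)
      rw [bracketAt_leaf_node_succ]
      exact h i j (by omega)

theorem exists_iterate_raise_eq {T : BT} {m s : ℕ} (hs : T.size = m + s)
    (hlt : ∀ i < m, i + T.bracketAt i < m) (hge : ∀ i, m ≤ i → T.bracketAt i = 0) :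
    ∃ S : BT, raise^[s] S = T := by
  induction s generalizing T with
  | zero => exact ⟨T, rfl⟩
  | succ s ih =>
    cases T with
    | leaf => simp [size] at hs
    | node l r =>
      have hroot := bracketAt_node_size l r
      have hr : r = leaf := by
        by_contra hne
        have := size_pos_of_ne_leaf hne
        simp only [size] at hs
        rcases lt_or_ge l.size m with hl | hl
        · have := hlt _ hl
          omega
        · have := hge _ hl
          omega
      subst hr
      simp only [bracketAt_node_leaf] at hlt hge
      obtain ⟨S, rfl⟩ := ih (by simpa [size, ← add_assoc] using hs) hlt hge
      exact ⟨S, Function.iterate_succ_apply' raise s S⟩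

theorem infModern_node_iff {T L R : BT} (hL : L ≠ leaf) :
    infModern (T, node L R) ↔ ∃ S, infModern (S, L) ∧ raise^[R.size + 1] S = T := by
  have hpos := size_pos_of_ne_leaf hL
  constructor
  · intro h
    obtain ⟨hs, hle⟩ := infModern_iff.1 h
    simp only [size] at hs
    -- The last node of `L` has empty right subtree in `node L R`.
    have hge (j : ℕ) (hj : L.size - 1 ≤ j) : T.bracketAt j = 0 := by
      have := hle _ _ hj
      rw [bracketAt_node_of_lt R (by omega)] at this
      have := add_bracketAt_lt_size (T := L) (i := L.size - 1) (by omega)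
      omega
    obtain ⟨S, rfl⟩ := exists_iterate_raise_eq (m := L.size) (s := R.size + 1) hs
      (fun i hi => by
        have := hle i i le_rfl
        rw [bracketAt_node_of_lt R hi] at this
        have := add_bracketAt_lt_size hi
        omega)
      fun j hj => hge j (by omega)
    simp only [size_iterate_raise, bracketAt_iterate_raise] at hs hle hge
    refine ⟨S, infModern_iff.2 ⟨by omega, fun i j hij => ?_⟩, rfl⟩
    rcases lt_or_ge i L.size with hi | hi
    · simpa only [bracketAt_node_of_lt R hi] using hle i j hij
    · simp [hge j (by omega)]
  · rintro ⟨S, h, rfl⟩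
    obtain ⟨hs, hle⟩ := infModern_iff.1 h
    simp only [infModern_iff, size_iterate_raise, bracketAt_iterate_raise]
    refine ⟨by simp only [size]; omega, fun i j hij => ?_⟩
    rcases lt_or_ge i L.size with hi | hi
    · simpa only [bracketAt_node_of_lt R hi] using hle i j hij
    · simp [bracketAt_of_size_le (T := S) (i := j) (by omega)]

/-- The lower trees `T` of the infinitely modern intervals with the given upper tree. -/
def lowerTrees : BT → List BT
  | leaf => [leaf]
  | node leaf R => (lowerTrees R).flatMap insertFirst
  | node (node a c) R => (lowerTrees (node a c)).map raise^[R.size + 1]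

theorem mem_lowerTrees {T T' : BT} : T ∈ lowerTrees T' ↔ infModern (T, T') := by
  induction T' using lowerTrees.induct generalizing T with
  | case1 => simp [lowerTrees, infModern_leaf_iff]
  | case2 R ih =>
    simp only [lowerTrees, infModern_leaf_node_iff, List.mem_flatMap, mem_insertFirst, ih]
    exact ⟨fun ⟨_, h, hT, hS⟩ => ⟨hT, hS ▸ h⟩, fun ⟨hT, h⟩ => ⟨_, h, hT, rfl⟩⟩
  | case3 a c R ih =>
    simp only [lowerTrees, infModern_node_iff (L := node a c) (by simp), List.mem_map, ih]

theorem nodup_lowerTrees (T' : BT) : (lowerTrees T').Nodup := by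
  induction T' using lowerTrees.induct with
  | case1 => simp [lowerTrees]
  | case2 R ih =>
    refine List.nodup_flatMap.2 ⟨fun S _ => nodup_insertFirst S, ih.imp fun hne T hS hS' => ?_⟩
    exact hne ((mem_insertFirst.1 hS).2.symm.trans (mem_insertFirst.1 hS').2)
  | case3 a c R ih => exact ih.map (raise_injective.iterate _)

end Decomposition

section LeftDepth

open Polynomial

/-- The number of nodes on the left branch of a tree; it is the catalytic statistic of the
enumeration. -/
def leftDepth : BT → ℕ
  | leaf => 0
  | node l _ => leftDepth l + 1

theorem leftDepth_iterate_raise (k : ℕ) (T : BT) :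
    (raise^[k] T).leftDepth = T.leftDepth + k := by
  induction k with
  | zero => rfl
  | succ k ih => rw [Function.iterate_succ_apply', raise, leftDepth, ih, add_assoc]

/-- The generating polynomial of a list of trees by left depth. -/
noncomputable def leftDepthPoly (s : List BT) : ℤ[X] := (s.map fun T => X ^ T.leftDepth).sum

/-- The generating polynomial of a list of trees, each tree of left depth `d` being weighted by
`1 + X + ⋯ + X ^ d`; it counts the ways to insert a new first node. -/
noncomputable def insertionPoly (s : List BT) : ℤ[X] :=
  (s.map fun T => ∑ i ∈ Finset.range (T.leftDepth + 1), X ^ i).sum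

theorem leftDepthPoly_insertFirst (S : BT) :
    leftDepthPoly (insertFirst S) = X * ∑ i ∈ Finset.range (S.leftDepth + 1), X ^ i := by
  induction S with
  | leaf => simp [leftDepthPoly, insertFirst, leftDepth]
  | node l r ih =>
    have hmap : leftDepthPoly ((insertFirst l).map (node · r)) =
        X * leftDepthPoly (insertFirst l) := by
      simp [leftDepthPoly, Function.comp_def, leftDepth, pow_succ', List.sum_map_mul_left]
    calc leftDepthPoly (insertFirst (node l r))
        = X + leftDepthPoly ((insertFirst l).map (node · r)) := by
          simp [leftDepthPoly, insertFirst, leftDepth]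
      _ = X * ∑ i ∈ Finset.range ((node l r).leftDepth + 1), X ^ i := by
          rw [hmap, ih, leftDepth, geom_sum_succ (n := l.leftDepth + 1)]
          ring

theorem leftDepthPoly_flatMap_insertFirst (s : List BT) :
    leftDepthPoly (s.flatMap insertFirst) = X * insertionPoly s := by
  induction s with
  | nil => simp [leftDepthPoly, insertionPoly]
  | cons S s ih =>
    have hins := leftDepthPoly_insertFirst S
    simp only [leftDepthPoly, insertionPoly, List.flatMap_cons, List.map_append, List.sum_append,
      List.map_cons, List.sum_cons, mul_add] at ih hins ⊢
    rw [ih, hins]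

theorem leftDepthPoly_map_iterate_raise (s : List BT) (k : ℕ) :
    leftDepthPoly (s.map raise^[k]) = X ^ k * leftDepthPoly s := by
  rw [leftDepthPoly, leftDepthPoly, ← List.sum_map_mul_left, List.map_map]
  refine congrArg List.sum (List.map_congr_left fun T _ => ?_)
  rw [Function.comp_apply, leftDepth_iterate_raise, pow_add, mul_comm]

theorem eval_one_leftDepthPoly (s : List BT) : (leftDepthPoly s).eval 1 = s.length := by
  simp [leftDepthPoly, eval_listSum, Function.comp_def]

theorem one_sub_X_mul_insertionPoly (s : List BT) :
    (1 - X) * insertionPoly s = C ((leftDepthPoly s).eval 1) - X * leftDepthPoly s := by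
  rw [eval_one_leftDepthPoly]
  induction s with
  | nil => simp [insertionPoly, leftDepthPoly]
  | cons T s ih =>
    simp only [insertionPoly, leftDepthPoly, List.map_cons, List.sum_cons, mul_add,
      mul_neg_geom_sum, List.length_cons] at ih ⊢
    rw [ih]
    push_cast
    simp only [map_add, map_one, pow_succ']
    ring

end LeftDepth

section Enumeration

/-- The tree as a binary tree of Mathlib. -/
def toBinaryTree : BT → BinaryTree Unit
  | leaf => .nil
  | node l r => .node () l.toBinaryTree r.toBinaryTree

/-- The inverse of `toBinaryTree`. -/
def ofBinaryTree : BinaryTree Unit → BT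
  | .nil => leaf
  | .node _ l r => node (ofBinaryTree l) (ofBinaryTree r)

/-- The bijection with the binary trees of Mathlib, through which their enumeration by Catalan
numbers is transferred to `BT`. -/
def equivBinaryTree : BT ≃ BinaryTree Unit where
  toFun := toBinaryTree
  invFun := ofBinaryTree
  left_inv T := by induction T with
    | leaf => rfl
    | node l r ihl ihr => exact congrArg₂ node ihl ihr
  right_inv t := by induction t with
    | nil => rfl
    | node _ l r ihl ihr => exact congrArg₂ (BinaryTree.node ()) ihl ihr

theorem numNodes_equivBinaryTree (T : BT) : (equivBinaryTree T).numNodes = T.size := by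
  induction T with
  | leaf => rfl
  | node l r ihl ihr => exact congrArg₂ (· + · + 1) ihl ihr

/-- The binary trees with `n` nodes. -/
def trees (n : ℕ) : Finset BT :=
  (BinaryTree.treesOfNumNodesEq n).map equivBinaryTree.symm.toEmbedding

theorem mem_trees {n : ℕ} {T : BT} : T ∈ trees n ↔ T.size = n := by
  rw [trees, Finset.mem_map_equiv, Equiv.symm_symm, BinaryTree.mem_treesOfNumNodesEq,
    numNodes_equivBinaryTree]

theorem card_trees (n : ℕ) : (trees n).card = catalan n := by
  rw [trees, Finset.card_map, BinaryTree.treesOfNumNodesEq_card_eq_catalan]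

theorem trees_zero : trees 0 = {leaf} := by
  ext T
  cases T <;> simp [mem_trees, size]

theorem sum_trees_succ {M : Type*} [AddCommMonoid M] (g : BT → M) (n : ℕ) :
    ∑ T ∈ trees (n + 1), g T =
      ∑ ij ∈ Finset.HasAntidiagonal.antidiagonal n,
        ∑ l ∈ trees ij.1, ∑ r ∈ trees ij.2, g (node l r) := by
  simp only [← Finset.sum_product', Finset.sum_sigma']
  symm
  refine Finset.sum_bij (fun x _ => node x.2.1 x.2.2) ?_ ?_ ?_ fun _ _ => rfl
  · simp only [Finset.mem_sigma, Finset.HasAntidiagonal.mem_antidiagonal, Finset.mem_product,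
      mem_trees, size]
    rintro _ ⟨hij, hl, hr⟩
    omega
  · simp only [Finset.mem_sigma, Finset.mem_product, mem_trees]
    rintro ⟨⟨i, j⟩, l, r⟩ ⟨-, hl, hr⟩ ⟨⟨i', j'⟩, l', r'⟩ ⟨-, hl', hr'⟩ h
    dsimp only at hl hr hl' hr'
    obtain ⟨rfl, rfl⟩ := node.inj h
    subst hl hr hl' hr'
    rfl
  · rintro (_ | ⟨l, r⟩) h
    · simp [mem_trees, size] at h
    · refine ⟨⟨(l.size, r.size), l, r⟩, ?_, rfl⟩
      simpa [mem_trees, size] using h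

/-- The generating polynomial of the infinitely modern intervals of size `n` by the left depth of
the lower tree. -/
noncomputable def intervalPoly (n : ℕ) : Polynomial ℤ :=
  ∑ T' ∈ trees n, leftDepthPoly (lowerTrees T')

theorem intervalPoly_zero : intervalPoly 0 = 1 := by
  simp [intervalPoly, trees_zero, lowerTrees, leftDepthPoly, leftDepth]

theorem eval_one_intervalPoly (n : ℕ) :
    (intervalPoly n).eval 1 = ({p : BT × BT | interval p n ∧ infModern p}.ncard : ℤ) := by
  classical
  have hset : {p : BT × BT | interval p n ∧ infModern p} =
      ((trees n).sigma fun T' => (lowerTrees T').toFinset).image fun x => (x.2, x.1) := by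
    ext ⟨T, T'⟩
    simp [interval_and_infModern_iff, mem_trees, mem_lowerTrees]
  have hinj : Function.Injective fun x : (_ : BT) × BT => (x.2, x.1) := by
    rintro ⟨_, _⟩ ⟨_, _⟩ h
    simpa [and_comm] using h
  rw [hset, Set.ncard_coe_finset, Finset.card_image_of_injective _ hinj, Finset.card_sigma,
    intervalPoly, Polynomial.eval_finsetSum]
  simp [eval_one_leftDepthPoly, List.toFinset_card_of_nodup (nodup_lowerTrees _)]

open Polynomial in
theorem sum_leftDepthPoly_node_succ (i j : ℕ) :
    ∑ L ∈ trees (i + 1), ∑ R ∈ trees j, leftDepthPoly (lowerTrees (node L R)) =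
      intervalPoly (i + 1) * (X * (X ^ j * (catalan j : ℤ[X]))) := by
  rw [intervalPoly.eq_def, Finset.sum_mul]
  refine Finset.sum_congr rfl fun L hL => ?_
  have hterm (R : BT) (hR : R ∈ trees j) :
      leftDepthPoly (lowerTrees (node L R)) = X ^ (j + 1) * leftDepthPoly (lowerTrees L) := by
    cases L with
    | leaf => simp [mem_trees, size] at hL
    | node a c => rw [lowerTrees, leftDepthPoly_map_iterate_raise, mem_trees.1 hR]
  rw [Finset.sum_congr rfl hterm, Finset.sum_const, card_trees, nsmul_eq_mul]
  ring

end Enumeration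

section GeneratingFunctions

open PowerSeries

/-- The generating function `∑ intervalPoly n * x ^ n` of infinitely modern intervals by size and
left depth, with `PowerSeries.X` in the role of `x` and `Polynomial.X` in that of `u`. -/
noncomputable def intervalSeries : (Polynomial ℤ)⟦X⟧ := mk intervalPoly

/-- The generating function of infinitely modern intervals by size. -/
noncomputable def countSeries : ℤ⟦X⟧ :=
  mk fun n => ({p : BT × BT | interval p n ∧ infModern p}.ncard : ℤ)

/-- The generating function in which every infinitely modern interval whose lower tree has left
depth `d` has the weight `1 + u + ⋯ + u ^ d`. -/
noncomputable def insertionSeries : (Polynomial ℤ)⟦X⟧ :=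
  mk fun n => ∑ R ∈ trees n, insertionPoly (lowerTrees R)

/-- The Catalan generating function evaluated at `x * u`. -/
noncomputable def catalanSeriesMul : (Polynomial ℤ)⟦X⟧ :=
  rescale Polynomial.X (map (Nat.castRingHom (Polynomial ℤ)) catalanSeries)

theorem catalanSeriesMul_eq :
    catalanSeriesMul = 1 + X * C Polynomial.X * catalanSeriesMul ^ 2 := by
  have h := congrArg (fun f => rescale Polynomial.X (map (Nat.castRingHom (Polynomial ℤ)) f))
    catalanSeries_sq_mul_X_add_one
  simp only [map_add, map_mul, map_pow, map_one, map_X, rescale_X] at h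
  rw [← catalanSeriesMul] at h
  linear_combination -h

theorem intervalSeries_eq :
    intervalSeries = 1 + X * C Polynomial.X *
      (insertionSeries + (intervalSeries - 1) * catalanSeriesMul) := by
  ext1 n
  cases n with
  | zero => simp [intervalSeries, intervalPoly_zero, mul_assoc]
  | succ n =>
    rw [mul_assoc, mul_add, mul_left_comm, map_add, coeff_succ_X_mul, map_add,
      ← one_mul (C _ * insertionSeries), coeff_mul, coeff_mul, ← Finset.sum_add_distrib]
    simp only [intervalSeries, coeff_mk, coeff_one, n.succ_ne_zero, if_false, zero_add]
    rw [intervalPoly, sum_trees_succ]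
    refine Finset.sum_congr rfl fun ⟨i, j⟩ _ => ?_
    cases i with
    | zero =>
      simp [trees_zero, lowerTrees, leftDepthPoly_flatMap_insertFirst, insertionSeries,
        Finset.mul_sum, intervalPoly_zero]
    | succ i =>
      rw [sum_leftDepthPoly_node_succ]
      simp [catalanSeriesMul]

theorem one_sub_mul_insertionSeries :
    (1 - C Polynomial.X) * insertionSeries =
      map Polynomial.C countSeries - C Polynomial.X * intervalSeries := by
  have hC : 1 - C Polynomial.X = C (1 - Polynomial.X : Polynomial ℤ) := by simp
  ext1 n
  rw [hC, map_sub (coeff n), coeff_C_mul, coeff_C_mul]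
  simp only [insertionSeries, countSeries, intervalSeries, coeff_mk,
    coeff_map, ← eval_one_intervalPoly, intervalPoly, Finset.mul_sum, one_sub_X_mul_insertionPoly,
    Finset.sum_sub_distrib, Polynomial.eval_finsetSum, map_sum]

theorem isUnit_insertionSeries_add :
    IsUnit (insertionSeries + (intervalSeries - 1) * catalanSeriesMul) := by
  have hinterval : constantCoeff intervalSeries = 1 := by
    rw [← coeff_zero_eq_constantCoeff_apply, intervalSeries, coeff_mk, intervalPoly_zero]
  have hinsertion : constantCoeff insertionSeries = 1 := by
    rw [← coeff_zero_eq_constantCoeff_apply, insertionSeries, coeff_mk]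
    simp [trees_zero, lowerTrees, insertionPoly, leftDepth]
  simp [isUnit_iff_constantCoeff, hinterval, hinsertion]

theorem countSeries_eq : countSeries = 1 + X * countSeries ^ 3 := by
  have hkernel := catalytic_kernel_eq catalanSeriesMul_eq intervalSeries_eq
    one_sub_mul_insertionSeries
  have hdvd : map Polynomial.C countSeries - C Polynomial.X ∣
      catalanSeriesMul - C Polynomial.X := by
    rw [← isUnit_insertionSeries_add.dvd_mul_left, hkernel]
    exact dvd_mul_left _ _
  have hroot := sub_dvd_sub_of_sub_dvd catalanSeriesMul_eq hdvd
  have hzero : countSeries - (1 + X * countSeries ^ 3) = 0 :=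
    eq_zero_of_map_C_sub_C_X_dvd (a := countSeries) (by simpa using hroot)
  exact sub_eq_zero.1 hzero

end GeneratingFunctions

end BT

theorem count_infinitely_modern_intervals (n : ℕ) (hn : 1 ≤ n) :
    (2 * n + 1) * Set.ncard {p : BT × BT | BT.interval p n ∧ BT.infModern p} =
      Nat.choose (3 * n) n := by
  have hraney := coeff_pow_of_eq_one_add_X_mul_pow BT.countSeries_eq n 1
  rw [pow_one, BT.countSeries, PowerSeries.coeff_mk, Nat.cast_one, one_mul] at hraney
  norm_cast at hraney
  have hchoose := Nat.choose_mul_succ_eq (3 * n) n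
  have hsub : 3 * n + 1 - n = 2 * n + 1 := by omega
  rw [hsub, ← hraney] at hchoose
  refine Nat.eq_of_mul_eq_mul_right (3 * n).add_one_pos ?_
  linear_combination -hchoose
end
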